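/- arXiv:1005.5192 — 3 statements merged into one kernel-verified Lean document; each statement's English description precedes it below -/
import Mathlib

section
/- Let 0 < b < 1 and α_n = −(n+2)^{−b} for all n ≥ 0. Then the gap in the zeros of Φ_n^{(−1)} around z = 1 has size 4·arcsin|α_n| to leading order: (arg(ζ_1^{(n)}) + 2π − arg(ζ_n^{(n)})) / (4·arcsin((n+2)^{−b})) → 1 as n → ∞. Moreover, the neighboring zero spacings are of smaller order: for each fixed k ∈ ℕ, n^b·(arg(ζ_{k+1}^{(n)}) − arg(ζ_k^{(n)})) → 0 as n → ∞. -/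
/-!
At `z = e^{2ih}` put `w_n = e^{-i(n-1)h} Φ_n(z)` (`szegoW`). With `α_n = -a_n`, `a_n` real, the Szegő
recursion becomes `w_{n+1} = e^{ih} (w_n + a_n conj w_n)`, and `z` is a zero of `Φ_{n+1}^{(-1)}` iff
`Re w_n = 0`. So a step is the linear map `diag (1 + a_n, 1 - a_n)` followed by a rotation by `h`.

*Lower bound.* If `tan h ≤ a_j` for all `j` involved, the cone `0 ≤ y ≤ x` is invariant, so `Re w`
stays positive (`szegoW_cone`). Hence every zero of `Φ_n^{(-1)}` has argument at least
`2 arctan (n^{-b})`.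

*Upper bound.* The phase of `w_n` (`szegoPhase`) is continuous in `h`, vanishes at `h = 0`, stays
nonnegative, and increases in step `j` by at least `h - a_j (1 + a_j)`. For `h = (1 + ε) n^{-b}` this
is at least a multiple of `n^{-b}` for all `j` in a window `[γ n, n)` with `γ < 1`, so the phase
reaches order `n^{1-b}`, which tends to infinity. By the intermediate value theorem there are, for
each fixed `k` and large `n`, more than `k` zeros with argument in `(0, 2h]`
(`ZeroEnum.le_of_phase`, `eventually_zero_le`).

Together `n^b arg ζ_k → 2` for each fixed `k` (`tendsto_zero`), which gives the second claim. The
zeros are symmetric under conjugation and `1` is not a zero (`last_zero_eq`), so the gap equals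
twice the argument of the first zero, which gives the first claim.
-/

open Filter

/-- The reversed polynomial `P*(z) = z^n conj(P(1/conj z))`. -/
noncomputable def PhiStar (P : Polynomial ℂ) : Polynomial ℂ :=
  (P.map (starRingEnd ℂ)).reverse

/-- The monic orthogonal polynomials given by the Szegő recursion. -/
noncomputable def Phi (α : ℕ → ℂ) : ℕ → Polynomial ℂ
  | 0 => 1
  | n + 1 => Polynomial.X * Phi α n -
      Polynomial.C (starRingEnd ℂ (α n)) * PhiStar (Phi α n)

/-- The paraorthogonal polynomial of degree `M` with boundary parameter `β`. -/
noncomputable def PhiPara (α : ℕ → ℂ) (β : ℂ) (M : ℕ) : Polynomial ℂ :=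
  Polynomial.X * Phi α (M - 1) -
    Polynomial.C (starRingEnd ℂ β) * PhiStar (Phi α (M - 1))

/-- `θ 0, …, θ (M-1)` enumerates the arguments (taken in `(0, 2π]`) of the zeros
of `P`, in increasing order. -/
def ZeroEnum (M : ℕ) (P : Polynomial ℂ) (θ : ℕ → ℝ) : Prop :=
  StrictMonoOn θ (Set.Iio M) ∧
  (∀ j < M, θ j ∈ Set.Ioc 0 (2 * Real.pi)) ∧
  (∀ j < M, P.IsRoot (Complex.exp (θ j * Complex.I))) ∧
  (∀ z : ℂ, P.IsRoot z → ∃ j < M, z = Complex.exp (θ j * Complex.I))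

/-! ### The Szegő recursion on the unit circle -/

lemma phi_monic_natDegree (α : ℕ → ℂ) (n : ℕ) :
    (Phi α n).Monic ∧ (Phi α n).natDegree = n := by
  induction n with
  | zero => simp [Phi, Polynomial.monic_one]
  | succ n ih =>
    obtain ⟨hm, hd⟩ := ih
    have hX : (Polynomial.X * Phi α n).Monic := Polynomial.monic_X.mul hm
    have hXd : (Polynomial.X * Phi α n).natDegree = n + 1 := by
      rw [Polynomial.natDegree_X_mul hm.ne_zero, hd]
    have hlt : (Polynomial.C (starRingEnd ℂ (α n)) * PhiStar (Phi α n)).degree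
        < (Polynomial.X * Phi α n).degree := by
      rw [Polynomial.degree_eq_natDegree hX.ne_zero, hXd]
      refine lt_of_le_of_lt Polynomial.degree_le_natDegree ?_
      have h1 := Polynomial.natDegree_C_mul_le (starRingEnd ℂ (α n)) (PhiStar (Phi α n))
      have h2 : (PhiStar (Phi α n)).natDegree ≤ n := by
        unfold PhiStar
        refine (Polynomial.reverse_natDegree_le _).trans ?_
        exact Polynomial.natDegree_map_le.trans hd.le
      exact_mod_cast Nat.lt_succ_of_le (h1.trans h2)
    refine ⟨hX.sub_of_left hlt, ?_⟩
    rw [Phi, Polynomial.natDegree_eq_of_degree_eq (Polynomial.degree_sub_eq_left_of_degree_lt hlt),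
      hXd]

/-- On the unit circle the reversed polynomial is `z ^ n * conj (Φ_n z)`. -/
lemma phiStar_eval (α : ℕ → ℂ) (n : ℕ) (z : ℂ) (hz : z * starRingEnd ℂ z = 1) :
    (PhiStar (Phi α n)).eval z = z ^ n * starRingEnd ℂ ((Phi α n).eval z) := by
  have hz0 : z ≠ 0 := left_ne_zero_of_mul_eq_one hz
  have hinv : z⁻¹ = starRingEnd ℂ z := inv_eq_of_mul_eq_one_right hz
  have hcz : starRingEnd ℂ z ≠ 0 := right_ne_zero_of_mul_eq_one hz
  let _ : Invertible (starRingEnd ℂ z) := invertibleOfNonzero hcz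
  have h := Polynomial.eval₂_reverse_mul_pow (RingHom.id ℂ) (starRingEnd ℂ z)
    ((Phi α n).map (starRingEnd ℂ))
  have hd : ((Phi α n).map (starRingEnd ℂ)).natDegree = n := by
    rw [Polynomial.natDegree_map, (phi_monic_natDegree α n).2]
  have hi : ⅟(starRingEnd ℂ z) = z := by
    rw [invOf_eq_inv, ← hinv, inv_inv]
  rw [hd, hi] at h
  change Polynomial.eval z (PhiStar (Phi α n)) * _ =
    Polynomial.eval _ (Polynomial.map _ _) at h
  rw [Polynomial.eval_map_apply] at h
  rw [← h, mul_comm, mul_assoc, mul_comm _ (z ^ n), ← mul_pow, hz, one_pow, mul_one]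

/-- The normalised Szegő recursion on the unit circle at the point `e^{2ih}`, for Verblunsky
coefficients `-a n`: it equals `e^{-i(n-1)h} Φ_n(e^{2ih})`. -/
noncomputable def szegoW (a : ℕ → ℝ) (h : ℝ) : ℕ → ℂ
  | 0 => Complex.exp (h * Complex.I)
  | n + 1 => Complex.exp (h * Complex.I) *
      (szegoW a h n + (a n : ℂ) * starRingEnd ℂ (szegoW a h n))

lemma exp_mul_conj (h : ℝ) : Complex.exp (h * Complex.I) *
    starRingEnd ℂ (Complex.exp (h * Complex.I)) = 1 := by
  rw [Complex.mul_conj, Complex.normSq_eq_norm_sq, Complex.norm_exp_ofReal_mul_I]; simp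

lemma phi_eval (a : ℕ → ℝ) (α : ℕ → ℂ) (hα : ∀ n, α n = Complex.ofReal (-(a n))) (h : ℝ)
    (n : ℕ) :
    Complex.exp (h * Complex.I) * (Phi α n).eval (Complex.exp (h * Complex.I) ^ 2) =
      Complex.exp (h * Complex.I) ^ n * szegoW a h n := by
  have hE := exp_mul_conj h
  induction n with
  | zero => simp [Phi, szegoW]
  | succ n ih =>
    have hz : Complex.exp (h * Complex.I) ^ 2 * starRingEnd ℂ (Complex.exp (h * Complex.I) ^ 2)
        = 1 := by rw [map_pow, ← mul_pow, hE, one_pow]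
    rw [Phi, szegoW, Polynomial.eval_sub, Polynomial.eval_mul, Polynomial.eval_mul,
      Polynomial.eval_X, Polynomial.eval_C, phiStar_eval α n _ hz, hα n, Complex.conj_ofReal]
    set E := Complex.exp (h * Complex.I)
    have ih2 := congrArg (starRingEnd ℂ) ih
    simp only [map_mul, map_pow] at ih2
    set P := (Phi α n).eval (E ^ 2)
    have hp : (E * starRingEnd ℂ E) ^ n = 1 := by rw [hE, one_pow]
    rw [mul_pow] at hp
    push_cast
    have : starRingEnd ℂ P = E * (starRingEnd ℂ E ^ n * starRingEnd ℂ (szegoW a h n)) := by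
      rw [← ih2, ← mul_assoc, hE, one_mul]
    rw [this]
    linear_combination E ^ 2 * ih + a n * E ^ (n + 2) * starRingEnd ℂ (szegoW a h n) * hp

/-- `e^{2ih}` is a zero of the paraorthogonal polynomial exactly when the normalised Szegő
recursion is purely imaginary there. -/
lemma para_isRoot_iff (a : ℕ → ℝ) (α : ℕ → ℂ) (hα : ∀ n, α n = Complex.ofReal (-(a n)))
    (h : ℝ) (n : ℕ) :
    (PhiPara α (-1) (n + 1)).IsRoot (Complex.exp (((2 * h : ℝ) : ℂ) * Complex.I)) ↔
      (szegoW a h n).re = 0 := by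
  have hE := exp_mul_conj h
  have h2 : Complex.exp (((2 * h : ℝ) : ℂ) * Complex.I) = Complex.exp (h * Complex.I) ^ 2 := by
    rw [← Complex.exp_nat_mul]; push_cast; ring_nf
  have hz : Complex.exp (h * Complex.I) ^ 2 * starRingEnd ℂ (Complex.exp (h * Complex.I) ^ 2)
      = 1 := by rw [map_pow, ← mul_pow, hE, one_pow]
  have ih := phi_eval a α hα h n
  have key : (PhiPara α (-1) (n + 1)).eval (Complex.exp (((2 * h : ℝ) : ℂ) * Complex.I)) =
      Complex.exp (h * Complex.I) ^ (n + 1) * ((2 * (szegoW a h n).re : ℝ) : ℂ) := by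
    rw [h2, PhiPara, Polynomial.eval_sub, Polynomial.eval_mul, Polynomial.eval_mul,
      Polynomial.eval_X, Polynomial.eval_C, Nat.add_sub_cancel, phiStar_eval α n _ hz,
      ← Complex.add_conj]
    set E := Complex.exp (h * Complex.I)
    have ih2 := congrArg (starRingEnd ℂ) ih
    simp only [map_mul, map_pow] at ih2
    set P := (Phi α n).eval (E ^ 2)
    have hp : (E * starRingEnd ℂ E) ^ n = 1 := by rw [hE, one_pow]
    rw [mul_pow] at hp
    have : starRingEnd ℂ P = E * (starRingEnd ℂ E ^ n * starRingEnd ℂ (szegoW a h n)) := by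
      rw [← ih2, ← mul_assoc, hE, one_mul]
    rw [this]
    simp only [map_neg, map_one]
    linear_combination E * ih + E ^ (n + 1) * starRingEnd ℂ (szegoW a h n) * hp
  rw [Polynomial.IsRoot, key, mul_eq_zero, Complex.ofReal_eq_zero]
  simp [Complex.exp_ne_zero]

lemma szegoW_neg (a : ℕ → ℝ) (h : ℝ) (n : ℕ) :
    szegoW a (-h) n = starRingEnd ℂ (szegoW a h n) := by
  have he : Complex.exp (((-h : ℝ) : ℂ) * Complex.I) =
      starRingEnd ℂ (Complex.exp (h * Complex.I)) := by
    rw [← Complex.exp_conj]; simp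
  induction n with
  | zero => rw [szegoW, szegoW, he]
  | succ n ih => rw [szegoW, szegoW, he, ih]; simp

/-! ### Absence of zeros near `1` -/

/-- Cone invariance: if `tan h` is at most every coefficient, then each step maps the cone
`0 ≤ y ≤ x`, `0 < x` into itself, so the real part never vanishes. -/
lemma szegoW_cone (a : ℕ → ℝ) (h A : ℝ) (ha1 : ∀ n, a n < 1) (h0 : 0 ≤ h) (h1 : h < Real.pi / 2)
    (hA : Real.tan h ≤ A) (N : ℕ) (hN : ∀ n < N, A ≤ a n) (hA1 : A < 1) (n : ℕ) (hn : n ≤ N) :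
    0 < (szegoW a h n).re ∧ 0 ≤ (szegoW a h n).im ∧ (szegoW a h n).im ≤ (szegoW a h n).re := by
  have hc : 0 < Real.cos h := Real.cos_pos_of_mem_Ioo ⟨by linarith [Real.pi_pos], h1⟩
  have hs : 0 ≤ Real.sin h := Real.sin_nonneg_of_nonneg_of_le_pi h0 (by linarith [Real.pi_pos])
  rw [Real.tan_eq_sin_div_cos, div_le_iff₀ hc] at hA
  induction n with
  | zero =>
    simp only [szegoW, Complex.exp_ofReal_mul_I_re, Complex.exp_ofReal_mul_I_im]
    exact ⟨hc, hs, by nlinarith⟩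
  | succ n ih =>
    obtain ⟨hx, hy, hyx⟩ := ih (by omega)
    have han := hN n (by omega)
    have ha1 := ha1 n
    have hsa : Real.sin h ≤ a n * Real.cos h := by nlinarith
    have ha0 : 0 ≤ a n := by
      by_contra hneg
      push Not at hneg
      nlinarith
    simp only [szegoW, Complex.mul_re, Complex.mul_im, Complex.add_re, Complex.add_im,
      Complex.exp_ofReal_mul_I_re, Complex.exp_ofReal_mul_I_im, Complex.conj_re, Complex.conj_im,
      Complex.ofReal_re, Complex.ofReal_im]
    set x := (szegoW a h n).re
    set y := (szegoW a h n).im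
    set c := Real.cos h
    set s := Real.sin h
    set t := a n
    have e1 : (1 - t) * y ≤ (1 - t) * x := by nlinarith
    have e2 : 0 ≤ (1 - t) * y := by nlinarith
    have e3 : s * ((1 - t) * y) ≤ (t * c) * ((1 - t) * x) := by
      apply mul_le_mul hsa e1 e2 (by positivity)
    have e4 : t * c * ((1 - t) * x) < c * ((1 + t) * x) := by
      have : 0 < c * x := by positivity
      nlinarith [mul_nonneg this.le (sq_nonneg t)]
    have e5 : s * ((1 + t) * x + (1 - t) * y) ≤ (t * c) * ((1 + t) * x + (1 - t) * x) := by
      apply mul_le_mul hsa (by linarith) (by positivity) (by positivity)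
    refine ⟨by linarith, ?_, ?_⟩
    · have : 0 ≤ s * ((1 + t) * x) := by positivity
      have : 0 ≤ c * ((1 - t) * y) := by positivity
      linarith
    · have : c * ((1 - t) * y) ≤ c * ((1 - t) * x) := by gcongr
      linarith

/-! ### The phase -/

/-- A lift of the argument of `szegoW a h n`, continuous in `h` when `0 ≤ a n < 1`: a step multiplies
by `e^{ih}` and by `1 + a e^{-2ip}` (`p` the current phase), whose real part is positive, so its
principal argument is continuous. -/
noncomputable def szegoPhase (a : ℕ → ℝ) (h : ℝ) : ℕ → ℝ
  | 0 => h
  | n + 1 => szegoPhase a h n + h +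
      Complex.arg (1 + (a n : ℂ) * Complex.exp (-(2 * szegoPhase a h n : ℝ) * Complex.I))

lemma norm_mul_exp {t : ℝ} (ht : 0 ≤ t) (x : ℝ) :
    ‖(t : ℂ) * Complex.exp (-(x : ℝ) * Complex.I)‖ = t := by
  rw [norm_mul, ← Complex.ofReal_neg, Complex.norm_exp_ofReal_mul_I]; simp [abs_of_nonneg ht]

lemma re_one_add_pos {t : ℝ} (ht : 0 ≤ t) (ht1 : t < 1) (x : ℝ) :
    0 < (1 + (t : ℂ) * Complex.exp (-(x : ℝ) * Complex.I)).re := by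
  have := (abs_le.1 (Complex.abs_re_le_norm ((t : ℂ) * Complex.exp (-(x : ℝ) * Complex.I)))).1
  rw [norm_mul_exp ht] at this
  rw [Complex.add_re, Complex.one_re]; linarith

lemma szegoW_polar (a : ℕ → ℝ) (ha : ∀ n, 0 ≤ a n) (ha1 : ∀ n, a n < 1) (h : ℝ) (n : ℕ) :
    ∃ r : ℝ, 0 < r ∧ szegoW a h n = r * Complex.exp (szegoPhase a h n * Complex.I) := by
  induction n with
  | zero => exact ⟨1, one_pos, by simp [szegoW, szegoPhase]⟩
  | succ n ih =>
    obtain ⟨r, hr, hw⟩ := ih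
    set p := szegoPhase a h n with hp
    set u := 1 + (a n : ℂ) * Complex.exp (-(2 * p : ℝ) * Complex.I) with hu
    have hre : 0 < u.re := re_one_add_pos (ha n) (ha1 n) _
    have hu0 : u ≠ 0 := by intro h; simp [h] at hre
    refine ⟨r * ‖u‖, by positivity, ?_⟩
    have hpol := Complex.norm_mul_exp_arg_mul_I u
    have hstep : szegoPhase a h (n + 1) = p + h + Complex.arg u := by
      rw [szegoPhase]
    rw [hstep, szegoW, hw]
    have hconj : starRingEnd ℂ (r * Complex.exp (p * Complex.I)) =
        r * Complex.exp (-(p * Complex.I)) := by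
      rw [map_mul, Complex.conj_ofReal, ← Complex.exp_conj]; simp
    have hsplit : Complex.exp (-(p * Complex.I)) =
        Complex.exp (p * Complex.I) * Complex.exp (-(2 * p : ℝ) * Complex.I) := by
      rw [← Complex.exp_add]; congr 1; push_cast; ring
    have hsum : Complex.exp (((p + h + Complex.arg u : ℝ) : ℂ) * Complex.I) =
        Complex.exp (p * Complex.I) * Complex.exp (h * Complex.I) *
          Complex.exp (Complex.arg u * Complex.I) := by
      rw [← Complex.exp_add, ← Complex.exp_add]; congr 1; push_cast; ring
    rw [hconj, hsplit, hsum]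
    rw [Complex.ofReal_mul r ‖u‖]
    linear_combination (r * Complex.exp (p * Complex.I) * Complex.exp (h * Complex.I)) * (-hu - hpol)

lemma szegoPhase_continuous (a : ℕ → ℝ) (ha : ∀ n, 0 ≤ a n) (ha1 : ∀ n, a n < 1) (n : ℕ) :
    Continuous (fun h => szegoPhase a h n) := by
  induction n with
  | zero => exact continuous_id
  | succ n ih =>
    simp only [szegoPhase]
    refine (ih.add continuous_id).add ?_
    rw [continuous_iff_continuousAt]
    intro h
    refine ContinuousAt.comp (g := Complex.arg) (Complex.continuousAt_arg ?_) ?_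
    · exact Or.inl (re_one_add_pos (ha n) (ha1 n) _)
    · refine Continuous.continuousAt ?_
      fun_prop

lemma szegoPhase_zero (a : ℕ → ℝ) (ha : ∀ n, 0 ≤ a n) (n : ℕ) : szegoPhase a 0 n = 0 := by
  induction n with
  | zero => rfl
  | succ n ih =>
    rw [szegoPhase, ih]
    have : (1 : ℂ) + a n = ((1 + a n : ℝ) : ℂ) := by push_cast; rfl
    simp only [mul_zero, Complex.ofReal_zero, neg_zero, zero_mul, Complex.exp_zero, mul_one,
      zero_add, this]
    exact Complex.arg_ofReal_of_nonneg (by linarith [ha n])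

/-- The diagonal part of a step fixes multiples of `π/2`, hence never takes a nonnegative phase
to a negative one. -/
lemma add_arg_nonneg {t p : ℝ} (ht : 0 ≤ t) (ht1 : t < 1) (hp : 0 ≤ p) :
    0 ≤ p + Complex.arg (1 + (t : ℂ) * Complex.exp (-(2 * p : ℝ) * Complex.I)) := by
  set u := 1 + (t : ℂ) * Complex.exp (-(2 * p : ℝ) * Complex.I) with hu
  have hre : 0 < u.re := re_one_add_pos ht ht1 _
  have harg : |Complex.arg u| < Real.pi / 2 := Complex.abs_arg_lt_pi_div_two_iff.2 (Or.inl hre)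
  obtain ⟨hl, hr⟩ := abs_lt.1 harg
  by_contra hneg
  push Not at hneg
  have hp2 : p < Real.pi / 2 := by linarith
  have hsp : 0 ≤ Real.sin p := Real.sin_nonneg_of_nonneg_of_le_pi hp (by linarith [Real.pi_pos])
  have hs : Real.sin (p + Complex.arg u) < 0 :=
    Real.sin_neg_of_neg_of_neg_pi_lt hneg (by linarith)
  -- `|u| sin (p + arg u)` is the imaginary part of `e^{ip} u`, namely `(1 - t) sin p`.
  have him : ‖u‖ * Real.sin (p + Complex.arg u) = (1 - t) * Real.sin p := by
    have e1 : (Complex.exp (p * Complex.I) * u).im = ‖u‖ * Real.sin (p + Complex.arg u) := by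
      conv_lhs => rw [← Complex.norm_mul_exp_arg_mul_I u]
      rw [mul_left_comm, ← Complex.exp_add, ← add_mul, ← Complex.ofReal_add,
        Complex.im_ofReal_mul, Complex.exp_ofReal_mul_I_im]
    have e2 : Complex.exp (p * Complex.I) * u = Complex.exp (p * Complex.I) +
        t * Complex.exp (((-p : ℝ) : ℂ) * Complex.I) := by
      rw [hu, mul_add, mul_one, mul_left_comm, ← Complex.exp_add]
      congr 3; push_cast; ring
    rw [← e1, e2, Complex.add_im, Complex.im_ofReal_mul, Complex.exp_ofReal_mul_I_im,
      Complex.exp_ofReal_mul_I_im, Real.sin_neg]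
    ring
  have hu0 : 0 < ‖u‖ := norm_pos_iff.2 (by intro h; simp [h] at hre)
  nlinarith [mul_neg_of_pos_of_neg hu0 hs, mul_nonneg (sub_nonneg.2 ht1.le) hsp]

lemma szegoPhase_nonneg (a : ℕ → ℝ) (ha : ∀ n, 0 ≤ a n) (ha1 : ∀ n, a n < 1) {h : ℝ}
    (hh : 0 ≤ h) (n : ℕ) : 0 ≤ szegoPhase a h n := by
  induction n with
  | zero => exact hh
  | succ n ih =>
    have := add_arg_nonneg (ha n) (ha1 n) ih
    rw [szegoPhase]; linarith

lemma abs_arg_le {t : ℝ} (ht : 0 ≤ t) (ht1 : t ≤ 1 / 2) (x : ℝ) :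
    |Complex.arg (1 + (t : ℂ) * Complex.exp (-(x : ℝ) * Complex.I))| ≤ t * (1 + t) := by
  have hn := norm_mul_exp ht x
  have h1 := Complex.norm_log_one_add_le (z := (t : ℂ) * Complex.exp (-(x : ℝ) * Complex.I))
    (by rw [hn]; linarith)
  rw [hn] at h1
  have h2 := Complex.abs_im_le_norm
    (Complex.log (1 + (t : ℂ) * Complex.exp (-(x : ℝ) * Complex.I)))
  rw [Complex.log_im] at h2
  have h3 : (1 - t)⁻¹ ≤ 2 := by
    rw [inv_le_comm₀ (by linarith) (by norm_num)]; linarith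
  nlinarith [sq_nonneg t, mul_le_mul_of_nonneg_left h3 (sq_nonneg t)]

/-- If `h` exceeds the maximal backward turn of a step by `d` from index `m` on, then the phase
grows by at least `d` per step. -/
lemma szegoPhase_growth (a : ℕ → ℝ) (ha : ∀ n, 0 ≤ a n) (ha1 : ∀ n, a n < 1) {h d : ℝ}
    (hh : 0 ≤ h) (m : ℕ)
    (hm : ∀ n ≥ m, a n ≤ 1 / 2 ∧ a n * (1 + a n) + d ≤ h) (j : ℕ) :
    j * d ≤ szegoPhase a h (m + j) := by
  induction j with
  | zero => simpa using szegoPhase_nonneg a ha ha1 hh m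
  | succ j ih =>
    obtain ⟨h1, h2⟩ := hm (m + j) (by omega)
    have := (abs_le.1 (abs_arg_le (ha (m + j)) h1 (2 * szegoPhase a h (m + j)))).1
    rw [← add_assoc, szegoPhase]
    push_cast at *
    linarith

/-! ### Counting zeros by the phase -/

lemma ZeroEnum.exists_eq {M : ℕ} {P : Polynomial ℂ} {θ : ℕ → ℝ} (H : ZeroEnum M P θ) {x : ℝ}
    (hx : x ∈ Set.Ioc 0 (2 * Real.pi)) (hroot : P.IsRoot (Complex.exp (x * Complex.I))) :
    ∃ j < M, θ j = x := by
  obtain ⟨j, hj, he⟩ := H.2.2.2 _ hroot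
  refine ⟨j, hj, ?_⟩
  obtain ⟨m, hm⟩ := Complex.exp_eq_exp_iff_exists_int.1 he
  have hI : x = θ j + m * (2 * Real.pi) := by
    have := congrArg Complex.im hm
    simpa using this
  have hθj := H.2.1 j hj
  have hpi := Real.pi_pos
  have h1 : m < 1 := by
    have : (m : ℝ) < 1 := by
      by_contra hc
      push Not at hc
      nlinarith [hx.2, hθj.1]
    exact_mod_cast this
  have h2 : -1 < m := by
    have : (-1 : ℝ) < m := by
      by_contra hc
      push Not at hc
      nlinarith [hx.1, hθj.2]
    exact_mod_cast this
  have h0 : m = 0 := by omega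
  simp [h0] at hI
  exact hI.symm

/-- Once the phase at `h` has reached `(k + 1) π`, the intermediate value theorem gives `k + 1`
zeros with argument at most `2 h`. -/
lemma ZeroEnum.le_of_phase {a : ℕ → ℝ} (ha : ∀ n, 0 ≤ a n) (ha1 : ∀ n, a n < 1)
    {α : ℕ → ℂ} (hα : ∀ n, α n = Complex.ofReal (-(a n))) {N : ℕ} {θ : ℕ → ℝ}
    (H : ZeroEnum (N + 1) (PhiPara α (-1) (N + 1)) θ) {h : ℝ} (h0 : 0 ≤ h) (hpi : h ≤ Real.pi)
    {k : ℕ} (hk : k < N + 1) (hph : (k + 1) * Real.pi ≤ szegoPhase a h N) :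
    θ k ≤ 2 * h := by
  have hpos := Real.pi_pos
  have hivt : ∀ i : Fin (k + 1), ∃ y ∈ Set.Icc 0 h,
      szegoPhase a y N = ((i : ℕ) : ℝ) * Real.pi + Real.pi / 2 := by
    intro i
    have hi : ((i : ℕ) : ℝ) ≤ k := by exact_mod_cast Nat.lt_succ_iff.1 i.2
    have := intermediate_value_Icc h0 (szegoPhase_continuous a ha ha1 N).continuousOn
    obtain ⟨y, hy, he⟩ := this (show ((i : ℕ) : ℝ) * Real.pi + Real.pi / 2 ∈ _ by
      rw [szegoPhase_zero a ha]
      exact ⟨by positivity, by nlinarith⟩)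
    exact ⟨y, hy, he⟩
  choose y hy hye using hivt
  have hroot : ∀ i, ∃ j < N + 1, θ j = 2 * y i := by
    intro i
    apply H.exists_eq
    · refine ⟨?_, by linarith [(hy i).2]⟩
      rcases (hy i).1.eq_or_lt with h' | h'
      · have := hye i
        rw [← h', szegoPhase_zero a ha] at this
        have : 0 < ((i : ℕ) : ℝ) * Real.pi + Real.pi / 2 := by positivity
        linarith
      · linarith
    · rw [para_isRoot_iff a α hα]
      obtain ⟨r, hr, hw⟩ := szegoW_polar a ha ha1 (y i) N
      rw [hw, Complex.re_ofReal_mul, Complex.exp_ofReal_mul_I_re, hye, Real.cos_add_pi_div_two,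
        Real.sin_nat_mul_pi]
      simp
  choose j hj hje using hroot
  by_contra hlt
  push Not at hlt
  have hjk : ∀ i, j i < k := by
    intro i
    by_contra hge
    push Not at hge
    have := H.1.monotoneOn (Set.mem_Iio.2 hk) (Set.mem_Iio.2 (hj i)) hge
    rw [hje] at this
    linarith [(hy i).2]
  have hinj : Function.Injective (fun i => (⟨j i, hjk i⟩ : Fin k)) := by
    intro i i' hii
    have h1 : j i = j i' := by simpa using hii
    have h2 : y i = y i' := by linarith [hje i, hje i', congrArg θ h1]
    have h3 := hye i
    rw [h2, hye i'] at h3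
    have h4 : ((i' : ℕ) : ℝ) = (i : ℕ) := by
      have := add_right_cancel h3
      exact mul_right_cancel₀ hpos.ne' this
    exact Fin.ext (by exact_mod_cast h4.symm)
  have := Fintype.card_le_of_injective _ hinj
  simp at this

lemma tendsto_div_of_hasDerivAt {f : ℝ → ℝ} (hf : HasDerivAt f 1 0) (h0 : f 0 = 0)
    {x : ℕ → ℝ} (hx : Tendsto x atTop (nhds 0)) (hne : ∀ᶠ n in atTop, x n ≠ 0) :
    Tendsto (fun n => f (x n) / x n) atTop (nhds 1) := by
  have := hasDerivAt_iff_tendsto_slope_zero.1 hf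
  have h2 := this.comp (tendsto_nhdsWithin_iff.2 ⟨hx, hne⟩)
  refine h2.congr fun n => ?_
  simp [h0, div_eq_inv_mul]

/-! ### Power-law coefficients -/

section PowerLaw

variable {b : ℝ}

lemma powerLaw_nonneg (n : ℕ) : 0 ≤ ((n : ℝ) + 2) ^ (-b) := by positivity

lemma powerLaw_lt_one (hb : 0 < b) (n : ℕ) : ((n : ℝ) + 2) ^ (-b) < 1 :=
  Real.rpow_lt_one_of_one_lt_of_neg (by linarith [n.cast_nonneg (α := ℝ)]) (by linarith)

lemma tendsto_natCast_rpow_neg (hb : 0 < b) :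
    Tendsto (fun n : ℕ => (n : ℝ) ^ (-b)) atTop (nhds 0) :=
  (tendsto_rpow_neg_atTop hb).comp tendsto_natCast_atTop_atTop

/-- No zero has argument below `2 arctan (n ^ (-b))`: there `tan (θ / 2)` is at most every
coefficient `(j + 2) ^ (-b)` with `j ≤ n - 2`, so `szegoW_cone` applies. -/
lemma two_arctan_le (hb : 0 < b) {α : ℕ → ℂ}
    (hα : ∀ n : ℕ, α n = (Complex.ofReal (-(((n : ℝ) + 2) ^ (-b)))))
    {n : ℕ} (hn : 2 ≤ n) {θ : ℝ} (h0 : 0 ≤ θ)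
    (hroot : (PhiPara α (-1) n).IsRoot (Complex.exp (θ * Complex.I))) :
    2 * Real.arctan ((n : ℝ) ^ (-b)) ≤ θ := by
  obtain ⟨N, rfl⟩ : ∃ N, n = N + 1 := ⟨n - 1, by omega⟩
  by_contra hlt
  push Not at hlt
  set A : ℝ := ((N + 1 : ℕ) : ℝ) ^ (-b) with hA
  have hlt2 : θ / 2 < Real.arctan A := by linarith
  have hpi2 := Real.arctan_lt_pi_div_two A
  have htan : Real.tan (θ / 2) ≤ A := by
    rw [← Real.tan_arctan A]
    exact (Real.tan_lt_tan_of_lt_of_lt_pi_div_two (by linarith [Real.pi_pos]) hpi2 hlt2).le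
  have hA1 : A < 1 := by
    apply Real.rpow_lt_one_of_one_lt_of_neg _ (by linarith)
    exact_mod_cast hn
  have hcone := szegoW_cone (fun n : ℕ => ((n : ℝ) + 2) ^ (-b)) (θ / 2) A (powerLaw_lt_one hb)
    (by linarith) (by linarith) htan N (fun j hj => by
      apply Real.rpow_le_rpow_of_nonpos (by positivity) _ (by linarith)
      have : j + 2 ≤ N + 1 := by omega
      exact_mod_cast this) hA1 N le_rfl
  have hre := (para_isRoot_iff (fun n : ℕ => ((n : ℝ) + 2) ^ (-b)) α hα (θ / 2) N).1
    (by rwa [mul_div_cancel₀ θ two_ne_zero])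
  linarith [hcone.1]

/-- Over the window `γ n ≤ j < n`, where `γ ^ (-b) = 1 + ε / 4`, the phase at
`h = (1 + ε) n ^ (-b)` increases by at least `(ε / 4) n ^ (-b)` per step, so in total by a
multiple of `n ^ (1 - b)`, which exceeds `(k + 1) π`. -/
lemma eventually_zero_le (hb : 0 < b) (hb1 : b < 1) {α : ℕ → ℂ}
    (hα : ∀ n : ℕ, α n = (Complex.ofReal (-(((n : ℝ) + 2) ^ (-b)))))
    {θ : ℕ → ℕ → ℝ} (hθ : ∀ n ≥ 1, ZeroEnum n (PhiPara α (-1) n) (θ n)) (k : ℕ)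
    {ε : ℝ} (hε : 0 < ε) :
    ∀ᶠ n : ℕ in atTop, θ n k ≤ 2 * ((1 + ε) * (n : ℝ) ^ (-b)) := by
  set γ : ℝ := (1 + ε / 4) ^ (-b⁻¹) with hγ
  have hγ0 : 0 < γ := by positivity
  have hγ1 : γ < 1 := Real.rpow_lt_one_of_one_lt_of_neg (by linarith) (by simpa using hb)
  have hγb : γ ^ (-b) = 1 + ε / 4 := by
    rw [hγ, ← Real.rpow_mul (by positivity)]
    rw [neg_mul_neg, inv_mul_cancel₀ hb.ne', Real.rpow_one]
  have hX := tendsto_natCast_rpow_neg hb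
  have hlim1 : Tendsto (fun n : ℕ => (1 + ε / 4) * (n : ℝ) ^ (-b)) atTop (nhds 0) := by
    simpa using hX.const_mul (1 + ε / 4)
  have hlim2 : Tendsto (fun n : ℕ => (1 + ε / 4) * (1 + (1 + ε / 4) * (n : ℝ) ^ (-b))) atTop
      (nhds (1 + ε / 4)) := by
    simpa using (hlim1.const_add 1).const_mul (1 + ε / 4)
  have hlim3 : Tendsto (fun n : ℕ => (1 + ε) * (n : ℝ) ^ (-b)) atTop (nhds 0) := by
    simpa using hX.const_mul (1 + ε)
  have hlim4 : Tendsto (fun n : ℕ => ε / 4 * ((1 - γ) * (n : ℝ) ^ (1 - b) - 2 * (n : ℝ) ^ (-b)))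
      atTop atTop := by
    have h1 : Tendsto (fun n : ℕ => (n : ℝ) ^ (1 - b)) atTop atTop :=
      (tendsto_rpow_atTop (by linarith)).comp tendsto_natCast_atTop_atTop
    have h2 := (h1.const_mul_atTop (show 0 < 1 - γ by linarith)).atTop_add
      ((hX.const_mul (2 : ℝ)).neg)
    exact h2.const_mul_atTop (show 0 < ε / 4 by positivity)
  have hlim5 : Tendsto (fun n : ℕ => (1 - γ) * (n : ℝ)) atTop atTop :=
    tendsto_natCast_atTop_atTop.const_mul_atTop (show 0 < 1 - γ by linarith)
  filter_upwards [hlim1.eventually_le_const (show (0 : ℝ) < 1 / 2 by norm_num),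
    hlim2.eventually_le_const (show 1 + ε / 4 < 1 + 3 * ε / 4 by linarith),
    hlim3.eventually_le_const Real.pi_pos, hlim4.eventually_ge_atTop ((k + 1) * Real.pi),
    hlim5.eventually_ge_atTop 2, eventually_gt_atTop k] with n e1 e2 e3 e4 e5 hnk
  obtain ⟨N, rfl⟩ : ∃ N, n = N + 1 := ⟨n - 1, by omega⟩
  set x : ℝ := ((N + 1 : ℕ) : ℝ) with hx
  have hx0 : 0 < x := by rw [hx]; positivity
  set X : ℝ := x ^ (-b) with hXdef
  have hX0 : 0 < X := by positivity
  refine ZeroEnum.le_of_phase (a := fun n : ℕ => ((n : ℝ) + 2) ^ (-b)) powerLaw_nonneg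
    (powerLaw_lt_one hb) hα (hθ (N + 1) (by omega)) (by positivity) e3 hnk ?_
  set m : ℕ := ⌈γ * x⌉₊ with hm
  have hmlt : (m : ℝ) < γ * x + 1 := Nat.ceil_lt_add_one (by positivity)
  have hmN : m ≤ N := by
    have : (m : ℝ) < N + 1 := by
      have : x = N + 1 := by rw [hx]; push_cast; rfl
      linarith
    exact Nat.lt_succ_iff.1 (by exact_mod_cast this)
  have hgrow := szegoPhase_growth (fun n : ℕ => ((n : ℝ) + 2) ^ (-b)) powerLaw_nonneg
    (powerLaw_lt_one hb) (h := (1 + ε) * X) (d := ε / 4 * X) (by positivity) m (fun j hj => by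
      have hj1 : γ * x ≤ (j : ℝ) + 2 := by
        have : (m : ℝ) ≤ j := by exact_mod_cast hj
        linarith [Nat.le_ceil (γ * x)]
      have hj2 : ((j : ℝ) + 2) ^ (-b) ≤ (1 + ε / 4) * X := by
        rw [← hγb, hXdef, ← Real.mul_rpow hγ0.le hx0.le]
        exact Real.rpow_le_rpow_of_nonpos (by positivity) hj1 (by linarith)
      have hj0 : 0 ≤ ((j : ℝ) + 2) ^ (-b) := powerLaw_nonneg j
      refine ⟨hj2.trans e1, ?_⟩
      have : ((j : ℝ) + 2) ^ (-b) * (1 + ((j : ℝ) + 2) ^ (-b)) ≤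
          ((1 + ε / 4) * X) * (1 + (1 + ε / 4) * X) := by gcongr
      nlinarith [mul_le_mul_of_nonneg_right e2 hX0.le]) (N - m)
  rw [Nat.add_sub_cancel' hmN] at hgrow
  refine le_trans ?_ hgrow
  refine e4.trans ?_
  have hpow : x ^ (1 - b) = x * X := by
    rw [hXdef, sub_eq_add_neg, Real.rpow_add hx0, Real.rpow_one]
  rw [hpow, Nat.cast_sub hmN]
  have hNx : (N : ℝ) = x - 1 := by rw [hx]; push_cast; ring
  have : (1 - γ) * x - 2 ≤ (N : ℝ) - m := by linarith
  have := mul_le_mul_of_nonneg_right this (show 0 ≤ ε / 4 * X by positivity)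
  linarith

/-- All zeros of fixed index sit, to leading order, at the edge `2 n ^ (-b)` of the gap. -/
lemma tendsto_zero (hb : 0 < b) (hb1 : b < 1) {α : ℕ → ℂ}
    (hα : ∀ n : ℕ, α n = (Complex.ofReal (-(((n : ℝ) + 2) ^ (-b)))))
    {θ : ℕ → ℕ → ℝ} (hθ : ∀ n ≥ 1, ZeroEnum n (PhiPara α (-1) n) (θ n)) (k : ℕ) :
    Tendsto (fun n : ℕ => (n : ℝ) ^ b * θ n k) atTop (nhds 2) := by
  have hX := tendsto_natCast_rpow_neg hb
  have hne : ∀ᶠ n : ℕ in atTop, (n : ℝ) ^ (-b) ≠ 0 := by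
    filter_upwards [eventually_gt_atTop 0] with n hn
    have : (0 : ℝ) < n := by exact_mod_cast hn
    positivity
  have hat : Tendsto (fun n : ℕ => 2 * (Real.arctan ((n : ℝ) ^ (-b)) / (n : ℝ) ^ (-b))) atTop
      (nhds 2) := by
    have h1 : HasDerivAt Real.arctan 1 0 := by simpa using Real.hasDerivAt_arctan 0
    simpa using (tendsto_div_of_hasDerivAt h1 Real.arctan_zero hX hne).const_mul 2
  rw [tendsto_order]
  constructor
  · intro c hc
    filter_upwards [hat.eventually_const_lt hc, eventually_ge_atTop 2, eventually_gt_atTop k]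
      with n h1 h2 h3
    have hn0 : (0 : ℝ) < n := by exact_mod_cast (by omega : 0 < n)
    have H := hθ n (by omega)
    have hle := two_arctan_le hb hα h2 (H.2.1 k h3).1.le (H.2.2.1 k h3)
    refine h1.trans_le ?_
    rw [Real.rpow_neg hn0.le, div_inv_eq_mul] at *
    have := mul_le_mul_of_nonneg_left hle (show 0 ≤ (n : ℝ) ^ b by positivity)
    linarith
  · intro c hc
    filter_upwards [eventually_zero_le hb hb1 hα hθ k (show 0 < (c - 2) / 4 by linarith),
      eventually_gt_atTop 0] with n h1 h2
    have hn0 : (0 : ℝ) < n := by exact_mod_cast h2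
    have hp : (0 : ℝ) < (n : ℝ) ^ b := by positivity
    rw [Real.rpow_neg hn0.le] at h1
    have := mul_le_mul_of_nonneg_left h1 hp.le
    have e : (n : ℝ) ^ b * (2 * ((1 + (c - 2) / 4) * ((n : ℝ) ^ b)⁻¹)) = 2 * (1 + (c - 2) / 4) := by
      field_simp
    linarith

/-- The zeros are symmetric under conjugation and `1` is not a zero. -/
lemma last_zero_eq (hb : 0 < b) {α : ℕ → ℂ}
    (hα : ∀ n : ℕ, α n = (Complex.ofReal (-(((n : ℝ) + 2) ^ (-b)))))
    {n : ℕ} (hn : 2 ≤ n) {θ : ℕ → ℝ} (H : ZeroEnum n (PhiPara α (-1) n) θ) :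
    θ (n - 1) = 2 * Real.pi - θ 0 := by
  have hn0 : (0 : ℝ) < n := by exact_mod_cast (by omega : 0 < n)
  have hone : ∀ j < n, θ j < 2 * Real.pi := by
    intro j hj
    refine (H.2.1 j hj).2.lt_of_ne fun he => ?_
    have hr := H.2.2.1 j hj
    have h1 : Complex.exp (θ j * Complex.I) = Complex.exp ((0 : ℝ) * Complex.I) := by
      rw [he]; push_cast; simp [Complex.exp_two_pi_mul_I]
    rw [h1] at hr
    have := two_arctan_le hb hα hn le_rfl hr
    have h2 : 0 < Real.arctan ((n : ℝ) ^ (-b)) := Real.arctan_pos.2 (by positivity)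
    linarith
  have hsymm : ∀ j < n, ∃ i < n, θ i = 2 * Real.pi - θ j := by
    intro j hj
    apply H.exists_eq
    · exact ⟨by linarith [hone j hj], by linarith [(H.2.1 j hj).1]⟩
    · have hr := H.2.2.1 j hj
      obtain ⟨N, rfl⟩ : ∃ N, n = N + 1 := ⟨n - 1, by omega⟩
      have h1 : Complex.exp (((2 * Real.pi - θ j : ℝ) : ℂ) * Complex.I) =
          Complex.exp (((2 * (-(θ j / 2)) : ℝ) : ℂ) * Complex.I) := by
        rw [Complex.exp_eq_exp_iff_exists_int]
        exact ⟨1, by push_cast; ring⟩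
      rw [h1, para_isRoot_iff (fun n : ℕ => ((n : ℝ) + 2) ^ (-b)) α hα, szegoW_neg,
        Complex.conj_re, ← para_isRoot_iff (fun n : ℕ => ((n : ℝ) + 2) ^ (-b)) α hα,
        mul_div_cancel₀ (θ j) two_ne_zero]
      exact hr
  have hmono := H.1.monotoneOn
  obtain ⟨i, hi, hie⟩ := hsymm 0 (by omega)
  obtain ⟨i', hi', hie'⟩ := hsymm (n - 1) (by omega)
  have h1 : θ i ≤ θ (n - 1) :=
    hmono (Set.mem_Iio.2 hi) (Set.mem_Iio.2 (by omega)) (by omega)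
  have h2 : θ 0 ≤ θ i' :=
    hmono (Set.mem_Iio.2 (by omega)) (Set.mem_Iio.2 hi') (by omega)
  linarith

end PowerLaw

theorem gap_size_for_power_law_coefficients
    (b : ℝ) (hb : b ∈ Set.Ioo (0 : ℝ) 1)
    (α : ℕ → ℂ) (hα : ∀ n : ℕ, α n = (Complex.ofReal (-(((n : ℝ) + 2) ^ (-b)))))
    (θ : ℕ → ℕ → ℝ)
    (hθ : ∀ n ≥ 1, ZeroEnum n (PhiPara α (-1) n) (θ n)) :
    Tendsto (fun n : ℕ =>
        (θ n 0 + 2 * Real.pi - θ n (n - 1)) /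
          (4 * Real.arcsin (((n : ℝ) + 2) ^ (-b)))) atTop (nhds 1) ∧
    ∀ k : ℕ, 1 ≤ k →
      Tendsto (fun n : ℕ => (n : ℝ) ^ b * (θ n k - θ n (k - 1))) atTop (nhds 0) := by
  obtain ⟨hb0, hb1⟩ := hb
  have hz := tendsto_zero hb0 hb1 hα hθ
  constructor
  · have hY : Tendsto (fun n : ℕ => ((n : ℝ) + 2) ^ (-b)) atTop (nhds 0) :=
      (tendsto_rpow_neg_atTop hb0).comp
        (tendsto_atTop_add_const_right _ 2 tendsto_natCast_atTop_atTop)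
    have has : Tendsto (fun n : ℕ => Real.arcsin (((n : ℝ) + 2) ^ (-b)) / ((n : ℝ) + 2) ^ (-b))
        atTop (nhds 1) := by
      have h1 : HasDerivAt Real.arcsin 1 0 := by
        simpa using Real.hasDerivAt_arcsin (x := 0) (by norm_num) (by norm_num)
      refine tendsto_div_of_hasDerivAt h1 Real.arcsin_zero hY (Eventually.of_forall fun n => ?_)
      positivity
    have hratio : Tendsto (fun n : ℕ => (((n : ℝ) + 2) / n) ^ b) atTop (nhds 1) := by
      have h1 : Tendsto (fun n : ℕ => 1 + 2 / (n : ℝ)) atTop (nhds 1) := by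
        simpa using (tendsto_const_div_atTop_nhds_zero_nat (2 : ℝ)).const_add 1
      have h2 := h1.rpow_const (p := b) (Or.inl one_ne_zero)
      rw [Real.one_rpow] at h2
      refine h2.congr' ?_
      filter_upwards [eventually_gt_atTop 0] with n hn
      have : (n : ℝ) ≠ 0 := by exact_mod_cast hn.ne'
      congr 1
      field_simp
    have hmain := (((hz 0).mul hratio).div (has.const_mul 2) (by norm_num))
    norm_num at hmain
    refine hmain.congr' ?_
    filter_upwards [eventually_ge_atTop 2] with n hn
    have hn0 : (0 : ℝ) < n := by exact_mod_cast (by omega : 0 < n)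
    rw [Pi.div_apply, last_zero_eq hb0 hα hn (hθ n (by omega)), Real.div_rpow (by positivity) hn0.le,
      Real.rpow_neg (by positivity)]
    have h1 : (0 : ℝ) < (n : ℝ) ^ b := by positivity
    have h2 : (0 : ℝ) < ((n : ℝ) + 2) ^ b := by positivity
    have h3 : 0 < Real.arcsin ((((n : ℝ) + 2) ^ b)⁻¹) := Real.arcsin_pos.2 (by positivity)
    field_simp
    ring
  · intro k _
    have := (hz k).sub (hz (k - 1))
    rw [sub_self] at this
    exact this.congr fun n => by ring
end

section
/- Let n ≥ 1 and let J be an n×n real matrix which is tridiagonal (J_{ij} = 0 whenever |i−j| ≥ 2, with rows and columns indexed 1,…,n) and whose nonzero entries alternate in sign along each of the three main diagonals, with the first diagonal element having the opposite sign of the first off-diagonal elements: there is ε ∈ {+1, −1} such that ε·(−1)^{i+1}·J_{ii} > 0 for all 1 ≤ i ≤ n, and ε·(−1)^i·J_{i,i+1} > 0 and ε·(−1)^i·J_{i+1,i} > 0 for all 1 ≤ i ≤ n−1. Then J is invertible. -/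
/-!
Multiplying row `i` by `ε (-1) ^ i` makes the diagonal and the subdiagonal positive and the
superdiagonal negative. If `J v = 0`, then row `i`, multiplied by `v i`, reads
`s i * (v i * v (i + 1)) = l * (v (i - 1) * v i) + d i * v i ^ 2` with positive `s i`, `l`, `d i`.
Hence all products `v i * v (i + 1)` are nonnegative by induction from the first row. With the
convention `v n = 0`, the same identity read backwards from the last row forces
`v (n - 1) = 0`, then `v (n - 2) = 0`, and so on, so the kernel of `J` is trivial.
-/

/-- The three-term recurrence satisfied by a kernel vector, after row scaling, has only the trivial
solution that vanishes at `n`. Here `d`, `-s` and `l` are the diagonal, superdiagonal and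
subdiagonal, and `l i` sits in row `i + 1`. -/
lemma three_term_recurrence_eq_zero (n : ℕ) (d s l v : ℕ → ℝ)
    (hd : ∀ i, i < n → 0 < d i) (hs : ∀ i, i + 1 < n → 0 < s i) (hl : ∀ i, i + 1 < n → 0 < l i)
    (h0 : 0 < n → d 0 * v 0 = s 0 * v 1)
    (hrec : ∀ i, i + 1 < n → l i * v i + d (i + 1) * v (i + 1) = s (i + 1) * v (i + 2))
    (hn : v n = 0) : ∀ i, i ≤ n → v i = 0 := by
  have hq : ∀ i, i + 1 < n → 0 ≤ v i * v (i + 1) := by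
    intro i
    induction i with
    | zero =>
      intro h
      refine nonneg_of_mul_nonneg_right (a := s 0) ?_ (hs 0 h)
      have e : s 0 * (v 0 * v (0 + 1)) = d 0 * v 0 ^ 2 := by
        linear_combination (-v 0) * h0 (by omega)
      rw [e]
      have := hd 0 (by omega)
      positivity
    | succ i ih =>
      intro h
      have hi : i + 1 < n := by omega
      refine nonneg_of_mul_nonneg_right (a := s (i + 1)) ?_ (hs _ h)
      have e : s (i + 1) * (v (i + 1) * v (i + 1 + 1))
          = l i * (v i * v (i + 1)) + d (i + 1) * v (i + 1) ^ 2 := by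
        linear_combination (-v (i + 1)) * hrec i hi
      rw [e]
      have h1 := hd (i + 1) hi
      have h2 := mul_nonneg (hl i hi).le (ih hi)
      positivity
  intro i hi
  induction hi using Nat.decreasingInduction with
  | self => exact hn
  | of_succ k hk ih =>
    have hdk := hd k hk
    rcases k with _ | k
    · have := h0 hk
      rw [zero_add] at ih
      rw [ih, mul_zero] at this
      exact (mul_eq_zero.mp this).resolve_left hdk.ne'
    · have e : l k * (v k * v (k + 1)) + d (k + 1) * v (k + 1) ^ 2 = 0 := by
        have := hrec k hk
        rw [show v (k + 2) = 0 from ih] at this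
        linear_combination v (k + 1) * this
      have h2 := mul_nonneg (hl k hk).le (hq k hk)
      have h3 : 0 ≤ d (k + 1) * v (k + 1) ^ 2 := by positivity
      have h4 : d (k + 1) * v (k + 1) ^ 2 = 0 := by linarith
      exact pow_eq_zero_iff two_ne_zero |>.mp ((mul_eq_zero.mp h4).resolve_left hdk.ne')

theorem tridiagonal_alternating_signs_invertible
    (n : ℕ) (hn : 1 ≤ n) (J : Matrix (Fin n) (Fin n) ℝ)
    (htri : ∀ i j : Fin n, ((i : ℕ) + 2 ≤ (j : ℕ) ∨ (j : ℕ) + 2 ≤ (i : ℕ)) → J i j = 0)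
    (hsign : ∃ ε : ℝ, (ε = 1 ∨ ε = -1) ∧
      (∀ i : Fin n, 0 < ε * (-1 : ℝ) ^ (i : ℕ) * J i i) ∧
      (∀ i : Fin n, ∀ h : (i : ℕ) + 1 < n,
        0 < ε * (-1 : ℝ) ^ ((i : ℕ) + 1) * J i ⟨(i : ℕ) + 1, h⟩ ∧
        0 < ε * (-1 : ℝ) ^ ((i : ℕ) + 1) * J ⟨(i : ℕ) + 1, h⟩ i)) :
    IsUnit J := by
  obtain ⟨ε, -, hdiag, hoff⟩ := hsign
  rw [Matrix.isUnit_iff_isUnit_det, isUnit_iff_ne_zero]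
  intro hdet
  obtain ⟨v, hv0, hv⟩ := Matrix.exists_mulVec_eq_zero_iff.mpr hdet
  apply hv0
  -- Extension of `J` and `v` by zero to natural-number indices.
  let A : ℕ → ℕ → ℝ := fun i j => if h : i < n ∧ j < n then J ⟨i, h.1⟩ ⟨j, h.2⟩ else 0
  let V : ℕ → ℝ := fun i => if h : i < n then v ⟨i, h⟩ else 0
  have hA : ∀ i j (hi : i < n) (hj : j < n), A i j = J ⟨i, hi⟩ ⟨j, hj⟩ := by
    intro i j hi hj
    simp [A, hi, hj]
  have hV : ∀ i (hi : i < n), V i = v ⟨i, hi⟩ := by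
    intro i hi
    simp [V, hi]
  have hVn : ∀ i, n ≤ i → V i = 0 := by
    intro i hi
    simp [V, Nat.not_lt.mpr hi]
  have hrow : ∀ i, i < n → ∀ s : Finset ℕ,
      (∀ j, j < n → j ∉ s → i + 2 ≤ j ∨ j + 2 ≤ i) → ∑ j ∈ s, A i j * V j = 0 := by
    intro i hi s hs
    have h1 : ∑ j ∈ Finset.range n, A i j * V j = 0 := by
      rw [Finset.sum_range]
      have := congrFun hv ⟨i, hi⟩
      simp only [Matrix.mulVec, dotProduct, Pi.zero_apply] at this
      rw [← this]
      refine Finset.sum_congr rfl fun j _ => ?_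
      rw [hA i j hi j.2, hV j j.2]
    have h2 : ∑ j ∈ s, A i j * V j = ∑ j ∈ s ∪ Finset.range n, A i j * V j := by
      refine Finset.sum_subset Finset.subset_union_left fun j hj hjs => ?_
      have hjn : j < n := by simpa [hjs] using hj
      rw [hA i j hi hjn, htri _ _ (hs j hjn hjs), zero_mul]
    have h3 : ∑ j ∈ Finset.range n, A i j * V j = ∑ j ∈ s ∪ Finset.range n, A i j * V j := by
      refine Finset.sum_subset Finset.subset_union_right fun j _ hjs => ?_
      rw [hVn j (by simpa using hjs), mul_zero]
    rw [h2, ← h3, h1]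
  have key := three_term_recurrence_eq_zero n (fun i => ε * (-1) ^ i * A i i)
    (fun i => ε * (-1) ^ (i + 1) * A i (i + 1)) (fun i => ε * (-1) ^ (i + 1) * A (i + 1) i) V
    (fun i hi => by simpa only [hA i i hi hi] using hdiag ⟨i, hi⟩)
    (fun i hi => by
      simpa only [hA i (i + 1) (by omega) hi] using (hoff ⟨i, by omega⟩ hi).1)
    (fun i hi => by
      simpa only [hA (i + 1) i hi (by omega)] using (hoff ⟨i, by omega⟩ hi).2)
    (fun h => by
      have := hrow 0 h {0, 1} (fun j _ hj => by simp at hj; omega)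
      rw [Finset.sum_pair (by omega)] at this
      simp only [pow_zero, zero_add, pow_one]
      linear_combination ε * this)
    (fun i hi => by
      have := hrow (i + 1) hi {i, i + 1, i + 2} (fun j _ hj => by simp at hj; omega)
      rw [Finset.sum_insert (by simp), Finset.sum_pair (by omega)] at this
      rw [show i + 1 + 1 = i + 2 from rfl]
      linear_combination ε * (-1) ^ (i + 1) * this)
    (hVn n le_rfl)
  funext i
  rw [← hV i i.2, key i i.2.le, Pi.zero_apply]
end

section
/- Let α ∈ ℝ with |α| < 1/5, and define g : ℝ → ℝ by g(x) = Arg(1 − α·e^{ix}), where Arg is the principal argument with values in (−π, π] (note Re(1 − α·e^{ix}) ≥ 1 − |α| > 0, so g is well defined and continuous). Then g is Lipschitz with Lipschitz constant strictly smaller than 1/2: there exists L < 1/2 with |g(x) − g(y)| ≤ L·|x − y| for all x, y ∈ ℝ. Consequently, the function x ↦ x − 2·g(x) = x − 2·Arg(1 − α·e^{ix}) is strictly increasing on ℝ. -/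
/-!
The point `1 - a e^{ix}` lies at distance `|a| < 1/5` from `1`, hence in the right half-plane, where
the principal logarithm is holomorphic and `arg = Im log`. The derivative of
`x ↦ log (1 - a e^{ix})` has modulus `|a| / |1 - a e^{ix}| ≤ |a| / (1 - |a|) ≤ 1/4`, so by the mean
value inequality the argument is `1/4`-Lipschitz (`abs_arg_sub_le`). Strict monotonicity of
`x - 2 arg (1 - a e^{ix})` follows, since twice the argument is `1/2`-Lipschitz.
-/

lemma abs_arg_sub_le (a : ℝ) (ha : |a| < 1 / 5) (x y : ℝ) :
    |Complex.arg (1 - (a : ℂ) * Complex.exp ((x : ℂ) * Complex.I)) -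
        Complex.arg (1 - (a : ℂ) * Complex.exp ((y : ℂ) * Complex.I))| ≤
      1 / 4 * |x - y| := by
  have hnorm (t : ℝ) : ‖(a : ℂ) * Complex.exp ((t : ℂ) * Complex.I)‖ = |a| := by
    rw [norm_mul, Complex.norm_exp_ofReal_mul_I, mul_one, Complex.norm_real, Real.norm_eq_abs]
  have hslit (t : ℝ) :
      1 - (a : ℂ) * Complex.exp ((t : ℂ) * Complex.I) ∈ Complex.slitPlane := by
    left
    have h := Complex.re_le_norm ((a : ℂ) * Complex.exp ((t : ℂ) * Complex.I))
    rw [hnorm] at h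
    rw [Complex.sub_re, Complex.one_re]
    linarith
  have hexp (t : ℝ) : HasDerivAt (fun s : ℝ => 1 - (a : ℂ) * Complex.exp ((s : ℂ) * Complex.I))
      (-((a : ℂ) * (Complex.exp ((t : ℂ) * Complex.I) * (1 * Complex.I)))) t :=
    (((Complex.ofRealCLM.hasDerivAt (x := t)).mul_const Complex.I).cexp.const_mul
      (a : ℂ)).const_sub 1
  have hbound (t : ℝ) : ‖-((a : ℂ) * (Complex.exp ((t : ℂ) * Complex.I) * (1 * Complex.I))) /
      (1 - (a : ℂ) * Complex.exp ((t : ℂ) * Complex.I))‖ ≤ 1 / 4 := by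
    have h := norm_sub_norm_le (1 : ℂ) ((a : ℂ) * Complex.exp ((t : ℂ) * Complex.I))
    rw [hnorm, norm_one] at h
    rw [norm_div, norm_neg, one_mul, ← mul_assoc, norm_mul, hnorm, Complex.norm_I, mul_one,
      div_le_iff₀ (by linarith)]
    linarith
  have hlog := convex_univ.norm_image_sub_le_of_norm_hasDerivWithin_le
    (fun t _ => ((hexp t).clog_real (hslit t)).hasDerivWithinAt) (fun t _ => hbound t)
    (Set.mem_univ y) (Set.mem_univ x)
  rw [← Complex.log_im, ← Complex.log_im, ← Complex.sub_im]
  exact (Complex.abs_im_le_norm _).trans hlog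

theorem arg_one_sub_mul_exp_lipschitz
    (a : ℝ) (ha : |a| < 1 / 5) :
    (∃ L : ℝ, L < 1 / 2 ∧ ∀ x y : ℝ,
      |Complex.arg (1 - (a : ℂ) * Complex.exp ((x : ℂ) * Complex.I)) -
          Complex.arg (1 - (a : ℂ) * Complex.exp ((y : ℂ) * Complex.I))| ≤
        L * |x - y|) ∧
    StrictMono (fun x : ℝ =>
      x - 2 * Complex.arg (1 - (a : ℂ) * Complex.exp ((x : ℂ) * Complex.I))) := by
  refine ⟨⟨1 / 4, by norm_num, abs_arg_sub_le a ha⟩, fun x y hxy => ?_⟩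
  have h := (le_abs_self _).trans (abs_arg_sub_le a ha y x)
  rw [abs_of_pos (sub_pos.2 hxy)] at h
  dsimp only
  linarith
end
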